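/- arXiv:1301.1064 — 4 statements merged into one kernel-verified Lean document; each statement's English description precedes it below -/
import Mathlib

section
/- Let r > 0, m > 0, let θ, φ : ℝ → ℝ be twice differentiable, and let F : ℝ → ℝ³ be a force function such that Newton's law m·p''(t) = F(t) + λ(t)·e_LD(t) holds for some scalar function λ (the line tension acts along the local down direction), where p(t) = r·(cos φ(t) cos θ(t), sin φ(t) cos θ(t), sin θ(t)). Then at every t with cos θ(t) ≠ 0: θ''(t) = ⟨F(t), e_LN(t)⟩/(r m) − sin θ(t) cos θ(t) φ'(t)², and φ''(t) = ⟨F(t), e_LE(t)⟩/(r m cos θ(t)) + 2 tan θ(t) θ'(t) φ'(t), where ⟨·,·⟩ is the Euclidean inner product. -/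
open Real Matrix

/-!
Along a curve on the sphere the local frame rotates according to
`e_LN' = θ' e_LD - φ' sin θ e_LE`, `e_LE' = φ' (sin θ e_LN + cos θ e_LD)` and
`e_LD' = -θ' e_LN - φ' cos θ e_LE`. Since `p = -r e_LD`, differentiating twice expresses `p''` in
the frame itself. The frame is orthonormal, so pairing Newton's law with `e_LN` and `e_LE` removes
the tension and isolates `θ''` and `φ''`.
-/

open scoped Topology

/-- The unit vector `e_LN` pointing to local north (increasing elevation `θ`) at the point of the
sphere with elevation `θ` and azimuth `φ`. -/
noncomputable def localNorth (θ φ : ℝ) : Fin 3 → ℝ :=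
  ![-cos φ * sin θ, -sin φ * sin θ, cos θ]

/-- The unit vector `e_LE` pointing to local east (increasing azimuth `φ`). It does not depend on
the elevation. -/
noncomputable def localEast (φ : ℝ) : Fin 3 → ℝ :=
  ![-sin φ, cos φ, 0]

/-- The unit vector `e_LD` pointing to local down, that is, from the point with elevation `θ` and
azimuth `φ` to the centre of the sphere, where the line is anchored. -/
noncomputable def localDown (θ φ : ℝ) : Fin 3 → ℝ :=
  ![-cos φ * cos θ, -sin φ * cos θ, -sin θ]

/-- The point with elevation `θ` and azimuth `φ` on the sphere of radius `r` about the origin. -/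
noncomputable def sphericalPosition (r θ φ : ℝ) : Fin 3 → ℝ :=
  ![r * cos φ * cos θ, r * sin φ * cos θ, r * sin θ]

lemma sphericalPosition_eq_smul_localDown (r θ φ : ℝ) :
    sphericalPosition r θ φ = -r • localDown θ φ := by
  simp [sphericalPosition, localDown, mul_assoc]

section Orthonormality

variable (θ φ : ℝ)

@[simp]
lemma localNorth_dotProduct_self : localNorth θ φ ⬝ᵥ localNorth θ φ = 1 := by
  simp only [localNorth, vec3_dotProduct, cons_val]
  linear_combination sin θ ^ 2 * sin_sq_add_cos_sq φ + sin_sq_add_cos_sq θ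

@[simp]
lemma localEast_dotProduct_self : localEast φ ⬝ᵥ localEast φ = 1 := by
  simp only [localEast, vec3_dotProduct, cons_val]
  linear_combination sin_sq_add_cos_sq φ

@[simp]
lemma localNorth_dotProduct_localEast : localNorth θ φ ⬝ᵥ localEast φ = 0 := by
  simp only [localNorth, localEast, vec3_dotProduct, cons_val]
  ring

@[simp]
lemma localEast_dotProduct_localNorth : localEast φ ⬝ᵥ localNorth θ φ = 0 := by
  rw [dotProduct_comm, localNorth_dotProduct_localEast]

@[simp]
lemma localDown_dotProduct_localNorth : localDown θ φ ⬝ᵥ localNorth θ φ = 0 := by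
  simp only [localDown, localNorth, vec3_dotProduct, cons_val]
  linear_combination sin θ * cos θ * sin_sq_add_cos_sq φ

@[simp]
lemma localDown_dotProduct_localEast : localDown θ φ ⬝ᵥ localEast φ = 0 := by
  simp only [localDown, localEast, vec3_dotProduct, cons_val]
  ring

end Orthonormality

lemma hasDerivAt_vec3 {𝕜 E : Type*} [NontriviallyNormedField 𝕜] [NormedAddCommGroup E]
    [NormedSpace 𝕜 E] {f g h : 𝕜 → E} {f' g' h' : E} {x : 𝕜} (hf : HasDerivAt f f' x)
    (hg : HasDerivAt g g' x) (hh : HasDerivAt h h' x) :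
    HasDerivAt (fun y => ![f y, g y, h y]) ![f', g', h'] x :=
  hasDerivAt_pi.2 <| Fin.forall_fin_succ.2 ⟨hf, Fin.forall_fin_two.2 ⟨hg, hh⟩⟩

section Kinematics

variable {θ φ : ℝ → ℝ} {t : ℝ}

section FrameRotation

variable {θ' φ' : ℝ}

lemma hasDerivAt_localNorth (hθ : HasDerivAt θ θ' t) (hφ : HasDerivAt φ φ' t) :
    HasDerivAt (fun s => localNorth (θ s) (φ s))
      (θ' • localDown (θ t) (φ t) - (φ' * sin (θ t)) • localEast (φ t)) t := by
  refine (hasDerivAt_vec3 (hφ.cos.neg.mul hθ.sin) (hφ.sin.neg.mul hθ.sin) hθ.cos).congr_deriv ?_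
  simp only [localDown, localEast, smul_vec3, cons_sub_cons, empty_sub_empty, smul_eq_mul,
    Pi.neg_apply]
  exact vec3_eq (by ring) (by ring) (by ring)

/-- The elevation `θ₀` is arbitrary because `e_LE` turns within the horizontal plane, towards the
vertical axis, and this direction lies in the plane of `e_LN` and `e_LD` at every elevation. -/
lemma hasDerivAt_localEast (θ₀ : ℝ) (hφ : HasDerivAt φ φ' t) :
    HasDerivAt (fun s => localEast (φ s))
      (φ' • (sin θ₀ • localNorth θ₀ (φ t) + cos θ₀ • localDown θ₀ (φ t))) t := by
  refine (hasDerivAt_vec3 hφ.sin.neg hφ.cos (hasDerivAt_const t 0)).congr_deriv ?_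
  have hθ₀ := sin_sq_add_cos_sq θ₀
  simp only [localNorth, localDown, smul_vec3, vec3_add, smul_eq_mul]
  refine vec3_eq ?_ ?_ (by ring)
  · linear_combination φ' * cos (φ t) * hθ₀
  · linear_combination φ' * sin (φ t) * hθ₀

lemma hasDerivAt_localDown (hθ : HasDerivAt θ θ' t) (hφ : HasDerivAt φ φ' t) :
    HasDerivAt (fun s => localDown (θ s) (φ s))
      (-(θ' • localNorth (θ t) (φ t) + (φ' * cos (θ t)) • localEast (φ t))) t := by
  refine
    (hasDerivAt_vec3 (hφ.cos.neg.mul hθ.cos) (hφ.sin.neg.mul hθ.cos) hθ.sin.neg).congr_deriv ?_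
  simp only [localNorth, localEast, smul_vec3, vec3_add, neg_cons, neg_empty, smul_eq_mul,
    Pi.neg_apply]
  exact vec3_eq (by ring) (by ring) (by ring)

lemma hasDerivAt_sphericalPosition (r : ℝ) (hθ : HasDerivAt θ θ' t) (hφ : HasDerivAt φ φ' t) :
    HasDerivAt (fun s => sphericalPosition r (θ s) (φ s))
      (r • (θ' • localNorth (θ t) (φ t) + (φ' * cos (θ t)) • localEast (φ t))) t := by
  simp only [sphericalPosition_eq_smul_localDown]
  exact ((hasDerivAt_localDown hθ hφ).const_smul (-r)).congr_deriv (neg_smul_neg r _)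

end FrameRotation

lemma deriv_deriv_sphericalPosition (r : ℝ)
    (hθ : ∀ᶠ s in 𝓝 t, DifferentiableAt ℝ θ s) (hθ' : DifferentiableAt ℝ (deriv θ) t)
    (hφ : ∀ᶠ s in 𝓝 t, DifferentiableAt ℝ φ s) (hφ' : DifferentiableAt ℝ (deriv φ) t) :
    deriv (deriv fun s => sphericalPosition r (θ s) (φ s)) t =
      r • ((deriv (deriv θ) t + sin (θ t) * cos (θ t) * deriv φ t ^ 2) • localNorth (θ t) (φ t) +
        (cos (θ t) * deriv (deriv φ) t - 2 * sin (θ t) * deriv θ t * deriv φ t) •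
          localEast (φ t) +
        (deriv θ t ^ 2 + cos (θ t) ^ 2 * deriv φ t ^ 2) • localDown (θ t) (φ t)) := by
  have velocity : (deriv fun s => sphericalPosition r (θ s) (φ s)) =ᶠ[𝓝 t] fun s =>
      r • (deriv θ s • localNorth (θ s) (φ s) + (deriv φ s * cos (θ s)) • localEast (φ s)) := by
    filter_upwards [hθ, hφ] with s hθs hφs
    exact (hasDerivAt_sphericalPosition r hθs.hasDerivAt hφs.hasDerivAt).deriv
  have hθt := hθ.self_of_nhds.hasDerivAt
  have hφt := hφ.self_of_nhds.hasDerivAt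
  have north := hθ'.hasDerivAt.smul (hasDerivAt_localNorth hθt hφt)
  have east := (hφ'.hasDerivAt.mul hθt.cos).smul (hasDerivAt_localEast (θ t) hφt)
  rw [velocity.deriv_eq]
  refine ((north.add east).const_smul r).deriv.trans ?_
  simp only [Pi.mul_apply]
  module

end Kinematics

theorem equations_of_motion_spherical_general {r m : ℝ} (hr : r ≠ 0) (hm : m ≠ 0)
    {θ φ : ℝ → ℝ} {t : ℝ}
    (hθ : ∀ᶠ s in 𝓝 t, DifferentiableAt ℝ θ s) (hθ' : DifferentiableAt ℝ (deriv θ) t)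
    (hφ : ∀ᶠ s in 𝓝 t, DifferentiableAt ℝ φ s) (hφ' : DifferentiableAt ℝ (deriv φ) t)
    {F : Fin 3 → ℝ} {lam : ℝ}
    (hNewton : m • deriv (deriv fun s => sphericalPosition r (θ s) (φ s)) t =
      F + lam • localDown (θ t) (φ t)) :
    deriv (deriv θ) t =
        F ⬝ᵥ localNorth (θ t) (φ t) / (r * m) - sin (θ t) * cos (θ t) * deriv φ t ^ 2 ∧
      (cos (θ t) ≠ 0 →
        deriv (deriv φ) t = F ⬝ᵥ localEast (φ t) / (r * m * cos (θ t)) +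
          2 * tan (θ t) * deriv θ t * deriv φ t) := by
  rw [deriv_deriv_sphericalPosition r hθ hθ' hφ hφ'] at hNewton
  have north : r * m * (deriv (deriv θ) t + sin (θ t) * cos (θ t) * deriv φ t ^ 2) =
      F ⬝ᵥ localNorth (θ t) (φ t) := by
    simpa [mul_left_comm, mul_assoc] using congrArg (· ⬝ᵥ localNorth (θ t) (φ t)) hNewton
  have east : r * m * (cos (θ t) * deriv (deriv φ) t - 2 * sin (θ t) * deriv θ t * deriv φ t) =
      F ⬝ᵥ localEast (φ t) := by
    simpa [mul_left_comm, mul_assoc] using congrArg (· ⬝ᵥ localEast (φ t)) hNewton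
  refine ⟨?_, fun hcos => ?_⟩
  · rw [← north]
    field_simp
    ring
  · rw [← east, tan_eq_sin_div_cos]
    field_simp
    ring

/-- equations of motion in spherical coordinates from Newton's law,
with line tension along the local down direction. -/
theorem equations_of_motion_spherical
    (r m : ℝ) (hr : 0 < r) (hm : 0 < m)
    (θ φ : ℝ → ℝ)
    (hθ : Differentiable ℝ θ) (hθ' : Differentiable ℝ (deriv θ))
    (hφ : Differentiable ℝ φ) (hφ' : Differentiable ℝ (deriv φ))
    (F : ℝ → Fin 3 → ℝ) (lam : ℝ → ℝ)
    (p : ℝ → Fin 3 → ℝ)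
    (hp : p = fun t => ![r * cos (φ t) * cos (θ t),
                         r * sin (φ t) * cos (θ t),
                         r * sin (θ t)])
    (eLN : ℝ → Fin 3 → ℝ)
    (heLN : eLN = fun t => ![-(cos (φ t)) * sin (θ t),
                             -(sin (φ t)) * sin (θ t),
                             cos (θ t)])
    (eLE : ℝ → Fin 3 → ℝ)
    (heLE : eLE = fun t => ![-(sin (φ t)), cos (φ t), 0])
    (eLD : ℝ → Fin 3 → ℝ)
    (heLD : eLD = fun t => ![-(cos (φ t)) * cos (θ t),
                             -(sin (φ t)) * cos (θ t),
                             -(sin (θ t))])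
    (hNewton : ∀ t : ℝ, m • deriv (deriv p) t = F t + lam t • eLD t) :
    ∀ t : ℝ, cos (θ t) ≠ 0 →
      deriv (deriv θ) t
        = (F t ⬝ᵥ eLN t) / (r * m) - sin (θ t) * cos (θ t) * (deriv φ t) ^ 2 ∧
      deriv (deriv φ) t
        = (F t ⬝ᵥ eLE t) / (r * m * cos (θ t)) + 2 * tan (θ t) * deriv θ t * deriv φ t := by
  subst hp heLN heLE heLD
  intro t hcos
  obtain ⟨north, east⟩ := equations_of_motion_spherical_general hr.ne' hm.ne'
    (.of_forall hθ) (hθ' t) (.of_forall hφ) (hφ' t) (hNewton t)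
  exact ⟨north, east hcos⟩
end

section
/- Let r, m, ρ, A, g > 0 and let C_L, C_Deq, Δα, ψ, W : ℝ → ℝ be functions (lift coefficient, equivalent drag coefficient, relative-wind inclination, roll angle, effective wind magnitude). Let θ, φ : ℝ → ℝ be twice differentiable with cos θ(t) ≠ 0 and V(t) := √(cos²θ φ'² + θ'²) > 0, and let γ : ℝ → ℝ be differentiable with cos γ = θ'/V and sin γ = cos θ φ'/V. Suppose the equations of motion θ'' = F_N/(r m) − sin θ cos θ φ'² and φ'' = F_E/(r m cos θ) + 2 tan θ θ' φ' hold, where the local-north and local-east force components are F_N = (1/2)ρ C_L A W² (Δα cos γ − (Δα² ψ + ψ) sin γ) − (1/2)ρ C_Deq A W² cos γ − m g cos θ and F_E = (1/2)ρ C_L A W² (Δα sin γ + (Δα² ψ + ψ) cos γ) − (1/2)ρ C_Deq A W² sin γ. Then for all t: γ' = [ (1/2)ρ C_L A W²/(r m) ] · (θ' cos γ + cos θ φ' sin γ)/(cos²θ φ'² + θ'²) · (Δα² + 1) ψ + (1/2)ρ A W² (C_L Δα − C_Deq)(θ' sin γ − cos θ φ' cos γ)/( r m (cos²θ φ'² +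 θ'²) ) + sin θ · φ' + g cos²θ φ' / ( r (cos²θ φ'² + θ'²) ). -/
open Real

/-!
The velocity `(p, q) = (θ', cos θ φ')` points in the direction `γ`, so `p sin γ = q cos γ` at all
nearby times. Differentiating this relation gives `γ' (p² + q²) = p q' - q p'` without
differentiating the speed. In the equations of motion the inertial terms contribute
`sin θ φ' (p² + q²)` to the right-hand side and the forces contribute `(p F_E - q F_N) / (r m)`.
-/

open scoped Topology

section AngleOfPlanarCurve

theorem sq_add_sq_ne_zero_of_cos_sin_eq_div {x y v α : ℝ}
    (hcos : cos α = x / v) (hsin : sin α = y / v) : x ^ 2 + y ^ 2 ≠ 0 := by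
  intro h
  have hone : (x ^ 2 + y ^ 2) / v ^ 2 = 1 := by
    rw [← cos_sq_add_sin_sq α, hcos, hsin, div_pow, div_pow, add_div]
  rw [h, zero_div] at hone
  exact zero_ne_one hone

theorem angle_rate_mul_sq_add_sq {p q γ : ℝ → ℝ} {p' q' γ' t : ℝ}
    (hp : HasDerivAt p p' t) (hq : HasDerivAt q q' t) (hγ : HasDerivAt γ γ' t)
    (hdir : (fun s => p s * sin (γ s)) =ᶠ[𝓝 t] fun s => q s * cos (γ s)) :
    γ' * (p t ^ 2 + q t ^ 2) = p t * q' - q t * p' := by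
  have hdir_t : p t * sin (γ t) = q t * cos (γ t) := hdir.eq_of_nhds
  have hdir' : p' * sin (γ t) + p t * (cos (γ t) * γ')
      = q' * cos (γ t) + q t * (-sin (γ t) * γ') :=
    (hp.mul hγ.sin).unique ((hq.mul hγ.cos).congr_of_eventuallyEq hdir)
  -- The signed length `l` turns the direction relation into polar coordinates.
  obtain ⟨l, hpl, hql⟩ : ∃ l, p t = l * cos (γ t) ∧ q t = l * sin (γ t) := by
    refine ⟨p t * cos (γ t) + q t * sin (γ t), ?_, ?_⟩
    · linear_combination sin (γ t) * hdir_t - p t * sin_sq_add_cos_sq (γ t)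
    · linear_combination -cos (γ t) * hdir_t - q t * sin_sq_add_cos_sq (γ t)
  rw [hpl, hql] at hdir' ⊢
  linear_combination l * hdir'

end AngleOfPlanarCurve

section MotionOnSphere

-- `ω` is the azimuthal rate `φ'`: the azimuth itself never enters the equations of motion.
variable {θ θ' ω : ℝ → ℝ} {t : ℝ}

theorem hasDerivAt_cos_mul_angularRate {θ₁ aE : ℝ} (hcosθ : cos (θ t) ≠ 0)
    (hθ : HasDerivAt θ θ₁ t)
    (hω : HasDerivAt ω (aE / cos (θ t) + 2 * tan (θ t) * θ₁ * ω t) t) :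
    HasDerivAt (fun s => cos (θ s) * ω s) (aE + sin (θ t) * θ₁ * ω t) t := by
  refine (hθ.cos.mul hω).congr_deriv ?_
  rw [tan_eq_sin_div_cos]
  field_simp
  ring

theorem velocity_angle_rate_of_acceleration {γ V : ℝ → ℝ} {γ' aN aE : ℝ}
    (hcosθ : cos (θ t) ≠ 0) (hθ : HasDerivAt θ (θ' t) t)
    (hθ' : HasDerivAt θ' (aN - sin (θ t) * cos (θ t) * ω t ^ 2) t)
    (hω : HasDerivAt ω (aE / cos (θ t) + 2 * tan (θ t) * θ' t * ω t) t)
    (hγ : HasDerivAt γ γ' t)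
    (hcos : ∀ᶠ s in 𝓝 t, cos (γ s) = θ' s / V s)
    (hsin : ∀ᶠ s in 𝓝 t, sin (γ s) = cos (θ s) * ω s / V s) :
    γ' = (θ' t * aE - cos (θ t) * ω t * aN) / (cos (θ t) ^ 2 * ω t ^ 2 + θ' t ^ 2)
      + sin (θ t) * ω t := by
  have hspeed : cos (θ t) ^ 2 * ω t ^ 2 + θ' t ^ 2 ≠ 0 := by
    rw [← mul_pow, add_comm]
    exact sq_add_sq_ne_zero_of_cos_sin_eq_div hcos.self_of_nhds hsin.self_of_nhds
  have hdir : (fun s => θ' s * sin (γ s)) =ᶠ[𝓝 t] fun s => cos (θ s) * ω s * cos (γ s) := by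
    filter_upwards [hcos, hsin] with s hcos_s hsin_s
    rw [hcos_s, hsin_s]
    ring
  have hrate :=
    angle_rate_mul_sq_add_sq hθ' (hasDerivAt_cos_mul_angularRate hcosθ hθ hω) hγ hdir
  rw [← sub_eq_iff_eq_add, eq_div_iff hspeed]
  linear_combination hrate

end MotionOnSphere

section CrosswindForce

/-- Local-north component of the aerodynamic force under the crosswind assumption: `L` and `D` are
the magnitudes of lift and equivalent drag, `Δα` the inclination of the relative wind, `ψ` the roll
angle and `γ` the velocity angle, all at one instant. Gravity is not included. -/
noncomputable def crosswindForceNorth (L D Δα ψ γ : ℝ) : ℝ :=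
  L * (Δα * cos γ - (Δα ^ 2 * ψ + ψ) * sin γ) - D * cos γ

/-- Local-east component of the aerodynamic force under the crosswind assumption, with the
arguments of `crosswindForceNorth`. -/
noncomputable def crosswindForceEast (L D Δα ψ γ : ℝ) : ℝ :=
  L * (Δα * sin γ + (Δα ^ 2 * ψ + ψ) * cos γ) - D * sin γ

theorem mul_crosswindForceEast_sub_mul_crosswindForceNorth (p q L D Δα ψ γ : ℝ) :
    p * crosswindForceEast L D Δα ψ γ - q * crosswindForceNorth L D Δα ψ γ
      = L * (p * cos γ + q * sin γ) * (Δα ^ 2 + 1) * ψ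
        + (L * Δα - D) * (p * sin γ - q * cos γ) := by
  unfold crosswindForceEast crosswindForceNorth
  ring

end CrosswindForce

theorem velocity_angle_rate_aero_general {θ θ' ω γ V : ℝ → ℝ} {r m g L D Δα ψ γ' t : ℝ}
    (hr : r ≠ 0) (hm : m ≠ 0) (hcosθ : cos (θ t) ≠ 0)
    (hθ : HasDerivAt θ (θ' t) t)
    (hθ' : HasDerivAt θ'
      ((crosswindForceNorth L D Δα ψ (γ t) - m * g * cos (θ t)) / (r * m)
        - sin (θ t) * cos (θ t) * ω t ^ 2) t)
    (hω : HasDerivAt ω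
      (crosswindForceEast L D Δα ψ (γ t) / (r * m * cos (θ t))
        + 2 * tan (θ t) * θ' t * ω t) t)
    (hγ : HasDerivAt γ γ' t)
    (hcos : ∀ᶠ s in 𝓝 t, cos (γ s) = θ' s / V s)
    (hsin : ∀ᶠ s in 𝓝 t, sin (γ s) = cos (θ s) * ω s / V s) :
    γ' =
      L / (r * m)
          * ((θ' t * cos (γ t) + cos (θ t) * ω t * sin (γ t))
              / (cos (θ t) ^ 2 * ω t ^ 2 + θ' t ^ 2))
          * (Δα ^ 2 + 1) * ψ
      + (L * Δα - D) * (θ' t * sin (γ t) - cos (θ t) * ω t * cos (γ t))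
          / (r * m * (cos (θ t) ^ 2 * ω t ^ 2 + θ' t ^ 2))
      + sin (θ t) * ω t
      + g * cos (θ t) ^ 2 * ω t / (r * (cos (θ t) ^ 2 * ω t ^ 2 + θ' t ^ 2)) := by
  rw [← div_div] at hω
  rw [velocity_angle_rate_of_acceleration hcosθ hθ hθ' hω hγ hcos hsin]
  have hcross := mul_crosswindForceEast_sub_mul_crosswindForceNorth
    (θ' t) (cos (θ t) * ω t) L D Δα ψ (γ t)
  field_simp
  linear_combination hcross / (cos (θ t) ^ 2 * ω t ^ 2 + θ' t ^ 2)

/-- expression of the velocity angle rate under the simplified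
aerodynamic force and the equations of motion. -/
theorem velocity_angle_rate_aero
    (r m ρ A g : ℝ) (hr : 0 < r) (hm : 0 < m) (hρ : 0 < ρ) (hA : 0 < A) (hg : 0 < g)
    (CL CDeq Δα ψ W : ℝ → ℝ)
    (θ φ γ : ℝ → ℝ)
    (hθ : Differentiable ℝ θ) (hθ' : Differentiable ℝ (deriv θ))
    (hφ : Differentiable ℝ φ) (hφ' : Differentiable ℝ (deriv φ))
    (hcosθ : ∀ t, cos (θ t) ≠ 0)
    (V : ℝ → ℝ)
    (hV : V = fun t => Real.sqrt (cos (θ t) ^ 2 * (deriv φ t) ^ 2 + (deriv θ t) ^ 2))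
    (hVpos : ∀ t, 0 < V t)
    (hγ : Differentiable ℝ γ)
    (hcos : ∀ t, cos (γ t) = deriv θ t / V t)
    (hsin : ∀ t, sin (γ t) = cos (θ t) * deriv φ t / V t)
    (FN FE : ℝ → ℝ)
    (hFN : FN = fun t =>
      (1/2) * ρ * CL t * A * (W t) ^ 2
          * (Δα t * cos (γ t) - ((Δα t) ^ 2 * ψ t + ψ t) * sin (γ t))
        - (1/2) * ρ * CDeq t * A * (W t) ^ 2 * cos (γ t)
        - m * g * cos (θ t))
    (hFE : FE = fun t =>
      (1/2) * ρ * CL t * A * (W t) ^ 2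
          * (Δα t * sin (γ t) + ((Δα t) ^ 2 * ψ t + ψ t) * cos (γ t))
        - (1/2) * ρ * CDeq t * A * (W t) ^ 2 * sin (γ t))
    (hEOMθ : ∀ t, deriv (deriv θ) t
        = FN t / (r * m) - sin (θ t) * cos (θ t) * (deriv φ t) ^ 2)
    (hEOMφ : ∀ t, deriv (deriv φ) t
        = FE t / (r * m * cos (θ t)) + 2 * tan (θ t) * deriv θ t * deriv φ t) :
    ∀ t : ℝ,
      deriv γ t =
        ((1/2) * ρ * CL t * A * (W t) ^ 2 / (r * m))
            * ((deriv θ t * cos (γ t) + cos (θ t) * deriv φ t * sin (γ t))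
                / (cos (θ t) ^ 2 * (deriv φ t) ^ 2 + (deriv θ t) ^ 2))
            * ((Δα t) ^ 2 + 1) * ψ t
        + (1/2) * ρ * A * (W t) ^ 2 * (CL t * Δα t - CDeq t)
            * (deriv θ t * sin (γ t) - cos (θ t) * deriv φ t * cos (γ t))
            / (r * m * (cos (θ t) ^ 2 * (deriv φ t) ^ 2 + (deriv θ t) ^ 2))
        + sin (θ t) * deriv φ t
        + g * cos (θ t) ^ 2 * deriv φ t
            / (r * (cos (θ t) ^ 2 * (deriv φ t) ^ 2 + (deriv θ t) ^ 2)) := by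
  subst hFN hFE
  intro t
  rw [velocity_angle_rate_aero_general (g := g)
    (L := (1/2) * ρ * CL t * A * (W t) ^ 2) (D := (1/2) * ρ * CDeq t * A * (W t) ^ 2)
    hr.ne' hm.ne' (hcosθ t) (hθ t).hasDerivAt
    ((hθ' t).hasDerivAt.congr_deriv (hEOMθ t)) ((hφ' t).hasDerivAt.congr_deriv (hEOMφ t))
    (hγ t).hasDerivAt (.of_forall hcos) (.of_forall hsin)]
  ring
end

section
/- (Proposition 1.) Let r, m, ρ, A, g, d_s > 0, let C_L : ℝ → ℝ be the lift coefficient, E : ℝ → ℝ the equivalent aerodynamic efficiency with E(t) > 0, and δ : ℝ → ℝ the steering input. Let θ, φ : ℝ → ℝ be twice differentiable with cos θ(t) ≠ 0 and V(t) := √(cos²θ φ'² + θ'²) > 0, let |v(t)| := r·V(t), and let γ : ℝ → ℝ be differentiable with cos γ = θ'/V and sin γ = cos θ φ'/V. Suppose: (i) Δα(t) = 1/E(t) and C_Deq(t) = C_L(t)/E(t); (ii) ψ(t) = δ(t)/d_s; (iii) the effective wind magnitude satisfies W(t)² = (1 + 1/E(t)²)·|v(t)|²; (iv) the equations of motion θ''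 = F_N/(r m) − sin θ cos θ φ'² and φ'' = F_E/(r m cos θ) + 2 tan θ θ' φ' hold with F_N = (1/2)ρ C_L A W² (Δα cos γ − (Δα² ψ + ψ) sin γ) − (1/2)ρ C_Deq A W² cos γ − m g cos θ and F_E = (1/2)ρ C_L A W² (Δα sin γ + (Δα² ψ + ψ) cos γ) − (1/2)ρ C_Deq A W² sin γ. Then for all t: γ'(t) = K̃(t)·δ(t) + T̃(t), where K̃(t) = (ρ C_L(t) A)/(2 m d_s) · (1 + 1/E(t)²)² · |v(t)| and T̃(t) = g cos θ(t) sin γ(t)/|v(t)| + sin θ(t)·φ'(t). -/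
open Real

/-!
Write `(θ', cos θ φ') = V (cos γ, sin γ)`. The component of this vector along `(-sin γ, cos γ)`
vanishes identically in time; differentiating that relation, rather than the square root `V`,
expresses `V γ'` as the component of the derivative of `(θ', cos θ φ')` along the same normal. By
the equations of motion this is `V sin θ φ'` plus the lateral force divided by `r m`. Drag and the
`Δα` part of the lift are parallel to the velocity, so only the roll part of the lift and gravity
are left.
-/

open Filter Topology

lemma radius_mul_deriv_angle_eq {x y R γ : ℝ → ℝ} {x' y' γ' t : ℝ}
    (hx : HasDerivAt x x' t) (hy : HasDerivAt y y' t) (hγ : HasDerivAt γ γ' t)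
    (hxR : ∀ᶠ s in 𝓝 t, x s = R s * cos (γ s)) (hyR : ∀ᶠ s in 𝓝 t, y s = R s * sin (γ s)) :
    R t * γ' = cos (γ t) * y' - sin (γ t) * x' := by
  have normal_eq_zero : (fun s => cos (γ s) * y s - sin (γ s) * x s) =ᶠ[𝓝 t] fun _ => 0 := by
    filter_upwards [hxR, hyR] with s hxs hys
    rw [hxs, hys]
    ring
  have deriv_normal : -sin (γ t) * γ' * y t + cos (γ t) * y'
      - (cos (γ t) * γ' * x t + sin (γ t) * x') = 0 :=
    ((hγ.cos.mul hy).sub (hγ.sin.mul hx)).unique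
      ((hasDerivAt_const t 0).congr_of_eventuallyEq normal_eq_zero)
  rw [hxR.self_of_nhds, hyR.self_of_nhds] at deriv_normal
  linear_combination -deriv_normal - R t * γ' * sin_sq_add_cos_sq (γ t)

section Spherical

-- `ω` is the azimuth rate `φ'`; the azimuth itself does not enter the dynamics.
variable {θ θ' ω γ V : ℝ → ℝ} {θ'' ω' γ' t : ℝ}

lemma speed_mul_deriv_velocityAngle_eq {aN aE : ℝ}
    (hθ : HasDerivAt θ (θ' t) t) (hθ' : HasDerivAt θ' θ'' t)
    (hω : HasDerivAt ω ω' t) (hγ : HasDerivAt γ γ' t) (hcosθ : cos (θ t) ≠ 0)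
    (hN : ∀ᶠ s in 𝓝 t, θ' s = V s * cos (γ s))
    (hE : ∀ᶠ s in 𝓝 t, cos (θ s) * ω s = V s * sin (γ s))
    (hEOMθ : θ'' = aN - sin (θ t) * cos (θ t) * ω t ^ 2)
    (hEOMω : ω' = aE / cos (θ t) + 2 * tan (θ t) * θ' t * ω t) :
    V t * γ' = cos (γ t) * aE - sin (γ t) * aN + V t * (sin (θ t) * ω t) := by
  have polar : V t * γ' = cos (γ t) * (-sin (θ t) * θ' t * ω t + cos (θ t) * ω')
      - sin (γ t) * θ'' :=
    radius_mul_deriv_angle_eq hθ' (hθ.cos.mul hω) hγ hN hE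
  have east_accel : cos (θ t) * ω' = aE + 2 * sin (θ t) * θ' t * ω t := by
    rw [hEOMω, tan_eq_sin_div_cos]
    field_simp
  have curvature : cos (γ t) * (sin (θ t) * θ' t * ω t)
      + sin (γ t) * (sin (θ t) * cos (θ t) * ω t ^ 2) = V t * (sin (θ t) * ω t) := by
    linear_combination cos (γ t) * sin (θ t) * ω t * hN.self_of_nhds
      + sin (γ t) * sin (θ t) * ω t * hE.self_of_nhds
      + V t * sin (θ t) * ω t * sin_sq_add_cos_sq (γ t)
  rw [polar, hEOMθ]
  linear_combination cos (γ t) * east_accel + curvature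

lemma lateral_force_eq (L D G α κ γ : ℝ) :
    cos γ * (L * (α * sin γ + κ * cos γ) - D * sin γ)
      - sin γ * (L * (α * cos γ - κ * sin γ) - D * cos γ - G) = L * κ + G * sin γ := by
  linear_combination L * κ * sin_sq_add_cos_sq γ

theorem proposition_1_velocity_angle_model_general
    {r m ρ A g CL CD Δα ψ W FN FE : ℝ} (hr : r ≠ 0) (hm : m ≠ 0)
    (hθ : HasDerivAt θ (θ' t) t) (hθ' : HasDerivAt θ' θ'' t)
    (hω : HasDerivAt ω ω' t) (hγ : HasDerivAt γ γ' t)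
    (hcosθ : cos (θ t) ≠ 0) (hV : V t ≠ 0)
    (hN : ∀ᶠ s in 𝓝 t, θ' s = V s * cos (γ s))
    (hE : ∀ᶠ s in 𝓝 t, cos (θ s) * ω s = V s * sin (γ s))
    (hW : W ^ 2 = (1 + Δα ^ 2) * (r * V t) ^ 2)
    (hFN : FN = 1 / 2 * ρ * CL * A * W ^ 2 * (Δα * cos (γ t) - (Δα ^ 2 * ψ + ψ) * sin (γ t))
      - 1 / 2 * ρ * CD * A * W ^ 2 * cos (γ t) - m * g * cos (θ t))
    (hFE : FE = 1 / 2 * ρ * CL * A * W ^ 2 * (Δα * sin (γ t) + (Δα ^ 2 * ψ + ψ) * cos (γ t))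
      - 1 / 2 * ρ * CD * A * W ^ 2 * sin (γ t))
    (hEOMθ : θ'' = FN / (r * m) - sin (θ t) * cos (θ t) * ω t ^ 2)
    (hEOMω : ω' = FE / (r * m * cos (θ t)) + 2 * tan (θ t) * θ' t * ω t) :
    γ' = ρ * CL * A / (2 * m) * (1 + Δα ^ 2) ^ 2 * (r * V t) * ψ
      + (g * cos (θ t) * sin (γ t) / (r * V t) + sin (θ t) * ω t) := by
  have lateral : cos (γ t) * FE - sin (γ t) * FN
      = 1 / 2 * ρ * CL * A * W ^ 2 * (Δα ^ 2 * ψ + ψ) + m * g * cos (θ t) * sin (γ t) := by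
    rw [hFE, hFN, lateral_force_eq]
  rw [← div_div] at hEOMω
  apply mul_left_cancel₀ hV
  calc V t * γ'
      = cos (γ t) * (FE / (r * m)) - sin (γ t) * (FN / (r * m)) + V t * (sin (θ t) * ω t) :=
        speed_mul_deriv_velocityAngle_eq hθ hθ' hω hγ hcosθ hN hE hEOMθ hEOMω
    _ = (cos (γ t) * FE - sin (γ t) * FN) / (r * m) + V t * (sin (θ t) * ω t) := by ring
    _ = _ := by
        rw [lateral, hW]
        field_simp
        ring

end Spherical

/-- Proposition 1: the velocity angle dynamics take the form
γ' = K̃ δ + T̃ with K̃ = (ρ C_L A)/(2 m d_s) (1 + 1/E²)² |v| and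
T̃ = g cos θ sin γ / |v| + sin θ φ'. -/
theorem proposition_1_velocity_angle_model
    (r m ρ A g ds : ℝ)
    (hr : 0 < r) (hm : 0 < m) (hρ : 0 < ρ) (hA : 0 < A) (hg : 0 < g) (hds : 0 < ds)
    (CL E δ : ℝ → ℝ) (hE : ∀ t, 0 < E t)
    (θ φ γ : ℝ → ℝ)
    (hθ : Differentiable ℝ θ) (hθ' : Differentiable ℝ (deriv θ))
    (hφ : Differentiable ℝ φ) (hφ' : Differentiable ℝ (deriv φ))
    (hcosθ : ∀ t, cos (θ t) ≠ 0)
    (V : ℝ → ℝ)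
    (hV : V = fun t => Real.sqrt (cos (θ t) ^ 2 * (deriv φ t) ^ 2 + (deriv θ t) ^ 2))
    (hVpos : ∀ t, 0 < V t)
    (v : ℝ → ℝ) (hv : v = fun t => r * V t)
    (hγ : Differentiable ℝ γ)
    (hcos : ∀ t, cos (γ t) = deriv θ t / V t)
    (hsin : ∀ t, sin (γ t) = cos (θ t) * deriv φ t / V t)
    -- (i) linearized relative-wind inclination and equivalent drag coefficient
    (Δα CDeq : ℝ → ℝ)
    (hΔα : ∀ t, Δα t = 1 / E t)
    (hCDeq : ∀ t, CDeq t = CL t / E t)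
    -- (ii) linearized roll angle
    (ψ : ℝ → ℝ) (hψ : ∀ t, ψ t = δ t / ds)
    -- (iii) effective wind magnitude
    (W : ℝ → ℝ) (hW : ∀ t, (W t) ^ 2 = (1 + 1 / (E t) ^ 2) * (v t) ^ 2)
    -- (iv) equations of motion with the simplified aerodynamic + gravity force
    (FN FE : ℝ → ℝ)
    (hFN : FN = fun t =>
      (1/2) * ρ * CL t * A * (W t) ^ 2
          * (Δα t * cos (γ t) - ((Δα t) ^ 2 * ψ t + ψ t) * sin (γ t))
        - (1/2) * ρ * CDeq t * A * (W t) ^ 2 * cos (γ t)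
        - m * g * cos (θ t))
    (hFE : FE = fun t =>
      (1/2) * ρ * CL t * A * (W t) ^ 2
          * (Δα t * sin (γ t) + ((Δα t) ^ 2 * ψ t + ψ t) * cos (γ t))
        - (1/2) * ρ * CDeq t * A * (W t) ^ 2 * sin (γ t))
    (hEOMθ : ∀ t, deriv (deriv θ) t
        = FN t / (r * m) - sin (θ t) * cos (θ t) * (deriv φ t) ^ 2)
    (hEOMφ : ∀ t, deriv (deriv φ) t
        = FE t / (r * m * cos (θ t)) + 2 * tan (θ t) * deriv θ t * deriv φ t) :
    ∀ t : ℝ,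
      deriv γ t =
        (ρ * CL t * A / (2 * m * ds)) * (1 + 1 / (E t) ^ 2) ^ 2 * v t * δ t
        + (g * cos (θ t) * sin (γ t) / v t + sin (θ t) * deriv φ t) := by
  intro t
  have north (s : ℝ) : deriv θ s = V s * cos (γ s) := by
    rw [hcos, mul_div_cancel₀ _ (hVpos s).ne']
  have east (s : ℝ) : cos (θ s) * deriv φ s = V s * sin (γ s) := by
    rw [hsin, mul_div_cancel₀ _ (hVpos s).ne']
  have wind : W t ^ 2 = (1 + Δα t ^ 2) * (r * V t) ^ 2 := by
    rw [hW, hΔα, hv, one_div_pow]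
  rw [proposition_1_velocity_angle_model_general hr.ne' hm.ne' (hθ t).hasDerivAt
    (hθ' t).hasDerivAt (hφ' t).hasDerivAt (hγ t).hasDerivAt (hcosθ t) (hVpos t).ne'
    (.of_forall north) (.of_forall east) wind (congrFun hFN t) (congrFun hFE t)
    (hEOMθ t) (hEOMφ t), hΔα, hψ, hv]
  ring
end

section
/- Let K_δ, K_c, ω, ζ ∈ ℝ, define A_cl(K) as the 3×3 real matrix with rows (0, −K·K_δ, 0), (0, 0, 1), (K_c·ω², −ω², −2ζω), let K₁ ≤ K₂, and suppose P ∈ ℝ^{3×3} is symmetric positive definite with A_cl(Kᵢ)ᵀP + P·A_cl(Kᵢ) negative definite for i = 1, 2. Let K : ℝ → ℝ be any function with K(t) ∈ [K₁, K₂] for all t, and let x : ℝ → ℝ³ be differentiable with x'(t) = A_cl(K(t))·x(t). Then the Lyapunov function t ↦ x(t)ᵀ P x(t) is differentiable with derivative x(t)ᵀ(A_cl(K(t))ᵀP + P A_cl(K(t)))x(t), which is strictly negative at every t with x(t) ≠ 0; in particular t ↦ x(t)ᵀPx(t) is nonincreasing. -/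
open Matrix

/-!
By the product rule, `xᵀPx` has derivative `xᵀ(AᵀP + PA)x` along `x' = Ax`. The matrices `A` for
which `-(AᵀP + PA)` is positive definite form a convex set, the preimage of a convex cone under a
linear map, so a matrix inequality verified at the vertices holds on their whole convex hull.
`A_cl` is affine in the gain, which places `A_cl(K)` on the segment between `A_cl(K₁)` and
`A_cl(K₂)`.
-/

section Derivatives

variable {n 𝕜 𝔸 : Type*} [Fintype n] [NontriviallyNormedField 𝕜] {t : 𝕜}

theorem hasDerivAt_dotProduct [NormedRing 𝔸] [NormedAlgebra 𝕜 𝔸] {u v : 𝕜 → n → 𝔸} {u' v' : n → 𝔸}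
    (hu : HasDerivAt u u' t) (hv : HasDerivAt v v' t) :
    HasDerivAt (fun s => u s ⬝ᵥ v s) (u' ⬝ᵥ v t + u t ⬝ᵥ v') t := by
  have hsum : HasDerivAt (fun s => ∑ i, u s i * v s i) (∑ i, (u' i * v t i + u t i * v' i)) t :=
    HasDerivAt.fun_sum fun i _ => (hasDerivAt_pi.1 hu i).mul (hasDerivAt_pi.1 hv i)
  rwa [Finset.sum_add_distrib] at hsum

theorem hasDerivAt_mulVec {m : Type*} [Finite m] [NormedRing 𝔸] [NormedAlgebra 𝕜 𝔸]
    (M : Matrix m n 𝔸) {u : 𝕜 → n → 𝔸} {u' : n → 𝔸} (hu : HasDerivAt u u' t) :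
    HasDerivAt (fun s => M *ᵥ u s) (M *ᵥ u') t :=
  have := Fintype.ofFinite m
  hasDerivAt_pi.2 fun i =>
    HasDerivAt.fun_sum fun j _ => (hasDerivAt_pi.1 hu j).const_mul (M i j)

end Derivatives

section LyapunovOperator

variable {n R : Type*} [Fintype n]

/-- The Lyapunov operator `A ↦ AᵀP + PA` of a square matrix `P`, as a linear map in the system
matrix `A` (the convexity argument varies `A` with `P` fixed). -/
def lyapunovOperator [CommRing R] (P : Matrix n n R) : Matrix n n R →ₗ[R] Matrix n n R where
  toFun A := Aᵀ * P + P * A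
  map_add' A B := by
    rw [transpose_add, add_mul, mul_add]
    abel
  map_smul' c A := by
    rw [transpose_smul, smul_mul, Matrix.mul_smul, RingHom.id_apply, smul_add]

theorem dotProduct_lyapunovOperator_mulVec [CommRing R] (P A : Matrix n n R) (v : n → R) :
    v ⬝ᵥ lyapunovOperator P A *ᵥ v = A *ᵥ v ⬝ᵥ P *ᵥ v + v ⬝ᵥ P *ᵥ A *ᵥ v := by
  calc v ⬝ᵥ (Aᵀ * P + P * A) *ᵥ v
    _ = v ⬝ᵥ Aᵀ *ᵥ P *ᵥ v + v ⬝ᵥ P *ᵥ A *ᵥ v := by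
      rw [add_mulVec, dotProduct_add, mulVec_mulVec, mulVec_mulVec]
    _ = A *ᵥ v ⬝ᵥ P *ᵥ v + v ⬝ᵥ P *ᵥ A *ᵥ v := by
      rw [dotProduct_mulVec v Aᵀ, vecMul_transpose]

theorem hasDerivAt_dotProduct_mulVec_self {𝕜 : Type*} [NontriviallyNormedField 𝕜]
    [NormedCommRing R] [NormedAlgebra 𝕜 R] (P : Matrix n n R) {A : Matrix n n R}
    {x : 𝕜 → n → R} {t : 𝕜} (hx : HasDerivAt x (A *ᵥ x t) t) :
    HasDerivAt (fun s => x s ⬝ᵥ P *ᵥ x s) (x t ⬝ᵥ lyapunovOperator P A *ᵥ x t) t := by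
  rw [dotProduct_lyapunovOperator_mulVec]
  exact hasDerivAt_dotProduct hx (hasDerivAt_mulVec P hx)

end LyapunovOperator

section VertexCondition

variable {n R : Type*} [CommRing R] [PartialOrder R] [StarRing R]

theorem dotProduct_mulVec_neg_of_posDef_neg [Fintype n] [IsOrderedAddMonoid R] [TrivialStar R]
    {M : Matrix n n R} (hM : (-M).PosDef) {v : n → R} (hv : v ≠ 0) :
    v ⬝ᵥ M *ᵥ v < 0 := by
  simpa only [star_trivial, neg_mulVec, dotProduct_neg, neg_pos] using hM.dotProduct_mulVec_pos hv

theorem convex_setOf_posDef [IsStrictOrderedRing R] [StarOrderedRing R] :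
    Convex R {M : Matrix n n R | M.PosDef} :=
  convex_iff_forall_pos.2 fun _ hM _ hN _ _ ha hb _ => (hM.smul ha).add (hN.smul hb)

theorem posDef_neg_lyapunovOperator_of_mem_convexHull [Fintype n] [IsStrictOrderedRing R]
    [StarOrderedRing R] {P A : Matrix n n R} {S : Set (Matrix n n R)}
    (hS : ∀ B ∈ S, (-lyapunovOperator P B).PosDef) (hA : A ∈ convexHull R S) :
    (-lyapunovOperator P A).PosDef :=
  convexHull_min hS (convex_setOf_posDef.linear_preimage (-lyapunovOperator P)) hA

theorem lyapunov_decreases_along_trajectories_general [Fintype n] {P : Matrix n n ℝ}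
    {S : Set (Matrix n n ℝ)} (hS : ∀ B ∈ S, (-lyapunovOperator P B).PosDef)
    {A : ℝ → Matrix n n ℝ} (hA : ∀ t, A t ∈ convexHull ℝ S)
    {x : ℝ → n → ℝ} (hx : ∀ t, HasDerivAt x (A t *ᵥ x t) t) :
    (∀ t, HasDerivAt (fun s => x s ⬝ᵥ P *ᵥ x s) (x t ⬝ᵥ lyapunovOperator P (A t) *ᵥ x t) t) ∧
    (∀ t, x t ≠ 0 → x t ⬝ᵥ lyapunovOperator P (A t) *ᵥ x t < 0) ∧
    Antitone (fun t => x t ⬝ᵥ P *ᵥ x t) := by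
  have hderiv t := hasDerivAt_dotProduct_mulVec_self P (hx t)
  have hneg (t) (ht : x t ≠ 0) : x t ⬝ᵥ lyapunovOperator P (A t) *ᵥ x t < 0 :=
    dotProduct_mulVec_neg_of_posDef_neg
      (posDef_neg_lyapunovOperator_of_mem_convexHull hS (hA t)) ht
  refine ⟨hderiv, hneg, antitone_of_hasDerivAt_nonpos hderiv fun t => ?_⟩
  rcases eq_or_ne (x t) 0 with ht | ht
  · rw [ht, zero_dotProduct, Pi.zero_apply]
  · exact (hneg t ht).le

end VertexCondition

section ClosedLoop

/-- The closed-loop matrix `A_cl(K)` of the velocity-angle loop, acting on the error state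
`(Δ_γ, δ_m, δ_m')`; the uncertain gain `K` is the last argument. -/
def closedLoopMatrix (Kδ Kc ω ζ K : ℝ) : Matrix (Fin 3) (Fin 3) ℝ :=
  !![0, -K * Kδ, 0;
     0, 0, 1;
     Kc * ω ^ 2, -(ω ^ 2), -(2 * ζ * ω)]

variable (Kδ Kc ω ζ : ℝ)

theorem closedLoopMatrix_eq_lineMap (K : ℝ) :
    closedLoopMatrix Kδ Kc ω ζ K =
      AffineMap.lineMap (closedLoopMatrix Kδ Kc ω ζ 0) (closedLoopMatrix Kδ Kc ω ζ 1) K := by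
  ext i j
  fin_cases i <;> fin_cases j <;> simp [closedLoopMatrix, AffineMap.lineMap_apply]

theorem closedLoopMatrix_mem_convexHull {K₁ K₂ K : ℝ} (hK : K ∈ Set.Icc K₁ K₂) :
    closedLoopMatrix Kδ Kc ω ζ K ∈
      convexHull ℝ {closedLoopMatrix Kδ Kc ω ζ K₁, closedLoopMatrix Kδ Kc ω ζ K₂} := by
  rw [convexHull_pair, closedLoopMatrix_eq_lineMap _ _ _ _ K,
    closedLoopMatrix_eq_lineMap _ _ _ _ K₁, closedLoopMatrix_eq_lineMap _ _ _ _ K₂, ← image_segment]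
  exact Set.mem_image_of_mem _ (Icc_subset_segment hK)

end ClosedLoop

/-- along any trajectory of the uncertain closed-loop system,
the quadratic Lyapunov function xᵀPx is differentiable with derivative
xᵀ(A_cl(K)ᵀP + P A_cl(K))x, which is negative whenever x ≠ 0; hence xᵀPx is
nonincreasing. -/
theorem lyapunov_decreases_along_trajectories
    (Kδ Kc ω ζ : ℝ)
    (Acl : ℝ → Matrix (Fin 3) (Fin 3) ℝ)
    (hAcl : Acl = fun K =>
      !![0, -K * Kδ, 0;
         0, 0, 1;
         Kc * ω ^ 2, -(ω ^ 2), -(2 * ζ * ω)])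
    (K₁ K₂ : ℝ) (hK : K₁ ≤ K₂)
    (P : Matrix (Fin 3) (Fin 3) ℝ)
    (hPsymm : P.IsSymm) (hPpos : P.PosDef)
    (hLMI1 : (-((Acl K₁)ᵀ * P + P * Acl K₁)).PosDef)
    (hLMI2 : (-((Acl K₂)ᵀ * P + P * Acl K₂)).PosDef)
    (K : ℝ → ℝ) (hKmem : ∀ t, K t ∈ Set.Icc K₁ K₂)
    (x : ℝ → Fin 3 → ℝ) (hx : Differentiable ℝ x)
    (hode : ∀ t, deriv x t = (Acl (K t)).mulVec (x t)) :
    (∀ t : ℝ,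
      HasDerivAt (fun s => x s ⬝ᵥ P.mulVec (x s))
        (x t ⬝ᵥ ((Acl (K t))ᵀ * P + P * Acl (K t)).mulVec (x t)) t) ∧
    (∀ t : ℝ, x t ≠ 0 →
      x t ⬝ᵥ ((Acl (K t))ᵀ * P + P * Acl (K t)).mulVec (x t) < 0) ∧
    Antitone (fun t => x t ⬝ᵥ P.mulVec (x t)) := by
  obtain rfl : Acl = closedLoopMatrix Kδ Kc ω ζ := hAcl
  exact lyapunov_decreases_along_trajectories_general
    (Set.forall_mem_insert.2 ⟨hLMI1, by rintro _ rfl; exact hLMI2⟩)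
    (fun t => closedLoopMatrix_mem_convexHull Kδ Kc ω ζ (hKmem t))
    (fun t => hode t ▸ (hx t).hasDerivAt)
end
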